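/- The SR transformation is sound for every WLL and U-WLL DCTRS R: for every term s ∈ T(F,V) and every term t ∈ T(F̄,V), if ⟨s̄⟩ →*_{SR(R)} t, then s →*_R t̂ (whenever the backtranslation t̂ is defined). -/

import Mathlib

set_option autoImplicit false

/-- First-order terms over a signature `F` and variables `V`. -/
inductive Term (F : Type) (V : Type) : Type where
  | var : V → Term F V
  | app : F → List (Term F V) → Term F V

namespace Term

variable {F V G W : Type}

/-- Application of a substitution. -/
def subst (σ : V → Term F W) : Term F V → Term F W
  | .var x => σ x
  | .app f ts => .app f (ts.attach.map (fun ⟨t, _⟩ => subst σ t))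

/-- Renaming of variables. -/
def rename (g : V → W) (t : Term F V) : Term F W := t.subst (fun x => .var (g x))

/-- Mapping of function symbols. -/
def mapF (g : F → G) : Term F V → Term G V
  | .var x => .var x
  | .app f ts => .app (g f) (ts.attach.map (fun ⟨t, _⟩ => mapF g t))

/-- Number of occurrences of the variable `x` in a term. -/
def count [DecidableEq V] (x : V) : Term F V → ℕ
  | .var y => if y = x then 1 else 0
  | .app _ ts => (ts.attach.map (fun ⟨t, _⟩ => count x t)).sum

/-- The list of variables occurring in a term (with repetitions). -/
def varList : Term F V → List V
  | .var x => [x]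
  | .app _ ts => ts.attach.flatMap (fun ⟨t, _⟩ => varList t)

/-- A term is linear if every variable occurs at most once in it. -/
def Linear [DecidableEq V] (t : Term F V) : Prop := ∀ x : V, t.count x ≤ 1

/-- Well-formedness of a term with respect to an arity assignment. -/
inductive WF (ar : F → ℕ) : Term F V → Prop where
  | var (x : V) : WF ar (.var x)
  | app (f : F) (ts : List (Term F V)) :
      ts.length = ar f → (∀ t ∈ ts, WF ar t) → WF ar (.app f ts)

end Term

/-- Number of occurrences of `x` in a sequence of terms. -/
def seqCount {F V : Type} [DecidableEq V] (x : V) (ts : List (Term F V)) : ℕ :=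
  (ts.map (Term.count x)).sum

/-- An oriented conditional rewrite rule `l → r ⇐ s1 ≈ t1, …, sk ≈ tk`. -/
structure CRule (F V : Type) : Type where
  lhs : Term F V
  rhs : Term F V
  conds : List (Term F V × Term F V)

/-- A conditional term rewriting system: a set of conditional rules. -/
abbrev CTRS (F V : Type) := Set (CRule F V)

namespace CRule

variable {F V W : Type}

/-- The sequence `l, t1, …, tk` of "pattern" terms of a rule. -/
def pats (ρ : CRule F V) : List (Term F V) := ρ.lhs :: ρ.conds.map Prod.snd

/-- The sequence `r, s1, …, sk` of "source" terms of a rule. -/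
def srcs (ρ : CRule F V) : List (Term F V) := ρ.rhs :: ρ.conds.map Prod.fst

/-- Weak left-linearity: `|l,t1,…,tk|_x = 1` for every `x ∈ Var(r,s1,…,sk)`. -/
def WLL [DecidableEq V] (ρ : CRule F V) : Prop :=
  ∀ x : V, 0 < seqCount x ρ.srcs → seqCount x ρ.pats = 1

/-- Determinism: `Var(si) ⊆ Var(l, t1, …, t_{i−1})`. -/
def Det [DecidableEq V] (ρ : CRule F V) : Prop :=
  ∀ i : ℕ, ∀ h : i < ρ.conds.length, ∀ x : V,
    0 < Term.count x (ρ.conds.get ⟨i, h⟩).1 →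
    0 < seqCount x (ρ.lhs :: (ρ.conds.take i).map Prod.snd)

/-- Type 3: `Var(r) ⊆ Var(l, s1, t1, …, sk, tk)`. -/
def Type3 [DecidableEq V] (ρ : CRule F V) : Prop :=
  ∀ x : V, 0 < Term.count x ρ.rhs →
    0 < seqCount x (ρ.lhs :: ρ.conds.flatMap (fun c => [c.1, c.2]))

/-- The left-hand side is a non-variable term. -/
def LhsNonVar (ρ : CRule F V) : Prop := ∀ x : V, ρ.lhs ≠ .var x

/-- Renaming the variables of a rule. -/
def mapV (g : V → W) (ρ : CRule F V) : CRule F W :=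
  ⟨ρ.lhs.rename g, ρ.rhs.rename g, ρ.conds.map (fun c => (c.1.rename g, c.2.rename g))⟩

end CRule

/-- `R` is a deterministic CTRS (of Type 3, left-hand sides non-variable). -/
def IsDCTRS {F V : Type} [DecidableEq V] (R : CTRS F V) : Prop :=
  ∀ ρ ∈ R, ρ.Det ∧ ρ.Type3 ∧ ρ.LhsNonVar

/-- All rules of `R` are weakly left-linear. -/
def IsWLL {F V : Type} [DecidableEq V] (R : CTRS F V) : Prop := ∀ ρ ∈ R, ρ.WLL

/-- Closure of a relation under contexts (rewriting below the root). -/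
inductive CtxStep {F V : Type} (root : Term F V → Term F V → Prop) :
    Term F V → Term F V → Prop where
  | root {s t : Term F V} : root s t → CtxStep root s t
  | congr {f : F} {pre post : List (Term F V)} {s t : Term F V} :
      CtxStep root s t →
      CtxStep root (.app f (pre ++ s :: post)) (.app f (pre ++ t :: post))

/-- A root rewrite step using a rule of `R`, conditions evaluated with `prev`. -/
def RootStep {F V : Type} (R : CTRS F V) (prev : Term F V → Term F V → Prop)
    (s t : Term F V) : Prop :=
  ∃ ρ ∈ R, ∃ σ : V → Term F V,
    s = ρ.lhs.subst σ ∧ t = ρ.rhs.subst σ ∧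
    ∀ c ∈ ρ.conds, Relation.ReflTransGen prev (c.1.subst σ) (c.2.subst σ)

/-- The level-stratified reduction relation `→_{(n),R}`. -/
def LevelStep {F V : Type} (R : CTRS F V) : ℕ → Term F V → Term F V → Prop
  | 0 => fun _ _ => False
  | n + 1 => CtxStep (RootStep R (LevelStep R n))

/-- The reduction relation `→_R = ⋃_{n} →_{(n),R}`. -/
def Red {F V : Type} (R : CTRS F V) (s t : Term F V) : Prop :=
  ∃ n : ℕ, LevelStep R n s t

/-- Many-step reduction `→*_R`. -/
def RedStar {F V : Type} (R : CTRS F V) : Term F V → Term F V → Prop :=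
  Relation.ReflTransGen (Red R)

/-- `n`-fold composition of a relation. -/
def NFold {α : Type} (r : α → α → Prop) : ℕ → α → α → Prop
  | 0 => fun a b => a = b
  | n + 1 => fun a c => ∃ b, r a b ∧ NFold r n b c

/-- One-hole contexts. -/
inductive Ctx (F V : Type) : Type where
  | hole : Ctx F V
  | app : F → List (Term F V) → Ctx F V → List (Term F V) → Ctx F V

/-- Filling the hole of a context with a term. -/
def Ctx.fill {F V : Type} : Ctx F V → Term F V → Term F V
  | .hole, t => t
  | .app f pre C post, t => .app f (pre ++ C.fill t :: post)
/-- Signature extended with the fresh symbols `U^ρ_i`. -/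
abbrev UF (F V : Type) := F ⊕ (CRule F V × ℕ)

/-- Embedding of terms over `F` into terms over the extended signature `U_R(F)`. -/
def liftF {F V : Type} (t : Term F V) : Term (UF F V) V := t.mapF Sum.inl

/-- The list `X⃗_i` enumerating `Var(l, t1, …, t_{i−1})` in a fixed order. -/
def Xlist {F V : Type} [DecidableEq V] (ρ : CRule F V) (i : ℕ) : List V :=
  (ρ.lhs.varList ++ ((ρ.conds.take (i - 1)).map Prod.snd).flatMap Term.varList).dedup

/-- A dummy condition (used as a default, never relevant). -/
def dummyCond {F V : Type} (ρ : CRule F V) : Term F V × Term F V := (ρ.lhs, ρ.lhs)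

/-- The term `U^ρ_i(t, X⃗_i)`. -/
def uterm {F V : Type} [DecidableEq V] (ρ : CRule F V) (i : ℕ) (t : Term F V) :
    Term (UF F V) V :=
  .app (Sum.inr (ρ, i)) (liftF t :: (Xlist ρ i).map Term.var)

/-- Left-hand side of the `j`-th unraveled rule of `ρ` (j = 0, …, k). -/
def ulhs {F V : Type} [DecidableEq V] (ρ : CRule F V) (j : ℕ) : Term (UF F V) V :=
  if j = 0 then liftF ρ.lhs
  else uterm ρ j (ρ.conds.getD (j - 1) (dummyCond ρ)).2

/-- Right-hand side of the `j`-th unraveled rule of `ρ` (j = 0, …, k). -/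
def urhs {F V : Type} [DecidableEq V] (ρ : CRule F V) (j : ℕ) : Term (UF F V) V :=
  if j = ρ.conds.length then liftF ρ.rhs
  else uterm ρ (j + 1) (ρ.conds.getD j (dummyCond ρ)).1

/-- The unconditional rules `U(ρ)` obtained by unraveling the rule `ρ`. -/
def URules {F V : Type} [DecidableEq V] (ρ : CRule F V) : Set (CRule (UF F V) V) :=
  { r | ∃ j ≤ ρ.conds.length, r = ⟨ulhs ρ j, urhs ρ j, []⟩ }

/-- The simultaneous unraveling `U(R)` of a DCTRS `R`. -/
def USys {F V : Type} [DecidableEq V] (R : CTRS F V) : CTRS (UF F V) V :=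
  ⋃ ρ ∈ R, URules ρ

/-- `R` is ultra-WLL (`U`-WLL): every rule of `U(R)` is WLL. -/
def IsUWLL {F V : Type} [DecidableEq V] (R : CTRS F V) : Prop :=
  ∀ r ∈ USys R, r.WLL
/-- Variables used for terms over the extended signature `F̄`: original
variables plus a countable supply of fresh variables. -/
abbrev WVar (V : Type) := V ⊕ ℕ

/-- The extended signature `F̄` of the SR transformation: the original symbols
(`c̄` for constructors, `f̄` for defined symbols, with extra arguments appended),
the fresh constant `⊥`, the fresh unary symbol `⟨·⟩`, and the fresh tuple
symbols `[ ]^ρ_j`. -/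
inductive SSym (F V : Type) : Type where
  | orig : F → SSym F V
  | bot : SSym F V
  | guard : SSym F V
  | tup : CRule F V → ℕ → SSym F V

/-- Terms over the extended signature `F̄`. -/
abbrev STerm (F V : Type) := Term (SSym F V) (WVar V)

/-- The fresh constant `⊥`. -/
def botT {F V : Type} : STerm F V := .app .bot []

/-- The fresh unary symbol `⟨·⟩`. -/
def guardT {F V : Type} (t : STerm F V) : STerm F V := .app .guard [t]

/-- `t̄`: the embedding of `t ∈ T(F,V)` into `T(F̄,V)` in which all the extra
arguments of defined symbols are filled with `⊥`.  Here `mOf f` is the number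
of conditional `f`-rules (0 for constructors). -/
def barT {F V : Type} (mOf : F → ℕ) : Term F V → STerm F V
  | .var x => .var (Sum.inl x)
  | .app f ts =>
      .app (.orig f)
        ((ts.attach.map (fun ⟨t, _⟩ => barT mOf t)) ++ List.replicate (mOf f) botT)

mutual
/-- `ext(t)`: the embedding of `t ∈ T(F,V)` into `T(F̄,V)` in which the extra
arguments of defined symbols are filled with distinct fresh variables; a
counter is threaded through to keep the fresh variables distinct. -/
def extT {F V : Type} (mOf : F → ℕ) : Term F V → ℕ → STerm F V × ℕ
  | .var x, c => (.var (Sum.inl x), c)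
  | .app f ts, c =>
      let p := extTList mOf ts c
      (.app (.orig f)
         (p.1 ++ (List.range (mOf f)).map (fun k => .var (Sum.inr (p.2 + k)))),
       p.2 + mOf f)

/-- `ext` on lists of terms, threading the fresh-variable counter. -/
def extTList {F V : Type} (mOf : F → ℕ) : List (Term F V) → ℕ → List (STerm F V) × ℕ
  | [], c => ([], c)
  | t :: ts, c =>
      let p := extT mOf t c
      let q := extTList mOf ts p.2
      (p.1 :: q.1, q.2)
end

/-- The backtranslation `t̂`: the partial mapping erasing `⟨·⟩` and the extra
arguments of defined symbols, recovering a term over `F`. -/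
def hatT {F V : Type} (ar : F → ℕ) : STerm F V → Option (Term F V)
  | .var (Sum.inl x) => some (.var x)
  | .var (Sum.inr _) => none
  | .app (.orig f) ts =>
      Option.map (Term.app f)
        ((ts.take (ar f)).attach.mapM (fun t => hatT ar t.1))
  | .app .guard [t] => hatT ar t
  | .app _ _ => none
decreasing_by
  · have h1 : t.1 ∈ ts := List.mem_of_mem_take t.2
    have := List.sizeOf_lt_of_mem h1
    simp only [Term.app.sizeOf_spec]
    omega
  · simp
    omega

/-- Embedding of `T(F,V)` into the terms over the unraveling signature
`U_R(F)` with extended variables. -/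
def liftUV {F V : Type} (t : Term F V) : Term (UF F V) (WVar V) :=
  (t.mapF Sum.inl).rename Sum.inl
/-- The list `V⃗_j` enumerating `Var(t1, …, t_{j−1})` in a fixed order. -/
def Vlist {F V : Type} [DecidableEq V] (ρ : CRule F V) (j : ℕ) : List V :=
  (((ρ.conds.take (j - 1)).map Prod.snd).flatMap Term.varList).dedup

/-- The term `[⟨inner⟩, V⃗_j]^ρ_j` (used in the rewrite rules of `SR(R)`). -/
def tupT {F V : Type} [DecidableEq V] (ρ : CRule F V) (j : ℕ) (inner : STerm F V) :
    STerm F V :=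
  .app (.tup ρ j) (guardT inner :: (Vlist ρ j).map (fun v => .var (Sum.inl v)))

/-- The `j`-th unconditional rule (j = 0, …, k) obtained by the SR
transformation from the `i`-th conditional `f`-rule
`ρ : f(w1,…,wn) → r ⇐ s1 ≈ t1, …, sk ≈ tk` (where `i = idx ρ`). -/
def condSRRule {F V : Type} [DecidableEq V] (mOf : F → ℕ) (idx : CRule F V → ℕ)
    (ρ : CRule F V) (j : ℕ) : CRule (SSym F V) (WVar V) :=
  match ρ.lhs with
  | .var _ => ⟨barT mOf ρ.lhs, barT mOf ρ.rhs, []⟩  -- irrelevant (lhs is never a variable)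
  | .app f ws =>
    let i := idx ρ
    let m := mOf f
    let p := extTList mOf ws 0
    let ws' := p.1
    let c0 := p.2
    let slot : STerm F V → List (STerm F V) := fun mid =>
      (List.range m).map (fun q => if q = i - 1 then mid else .var (Sum.inr (c0 + q)))
    let k := ρ.conds.length
    ⟨(if j = 0 then
        Term.app (SSym.orig f) (ws' ++ slot botT)
      else
        Term.app (SSym.orig f)
          (ws' ++ slot (tupT ρ j (extT mOf (ρ.conds.getD (j - 1) (dummyCond ρ)).2 (c0 + m)).1))),
     (if j = k then
        guardT (barT mOf ρ.rhs)
      else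
        Term.app (SSym.orig f)
          (ws' ++ slot (tupT ρ (j + 1) (barT mOf (ρ.conds.getD j (dummyCond ρ)).1)))),
     []⟩

/-- The unconditional rule `ext(l) → ⟨r̄⟩` obtained by the SR transformation
from an unconditional rule `l → r`. -/
def uncondSRRule {F V : Type} (mOf : F → ℕ) (ρ : CRule F V) : CRule (SSym F V) (WVar V) :=
  ⟨(extT mOf ρ.lhs 0).1, guardT (barT mOf ρ.rhs), []⟩

/-- The auxiliary rule `⟨⟨x⟩⟩ → ⟨x⟩`. -/
def auxGuard {F V : Type} : CRule (SSym F V) (WVar V) :=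
  ⟨guardT (guardT (.var (Sum.inr 0))), guardT (.var (Sum.inr 0)), []⟩

/-- The auxiliary rule shifting `⟨·⟩` upward over the `i`-th argument of the
symbol `f` (and resetting the extra arguments of defined symbols):
`f̄(x1,…,⟨xi⟩,…,xn, z1,…,zm) → ⟨f̄(x1,…,xn, ⊥,…,⊥)⟩`. -/
def auxShift {F V : Type} (ar mOf : F → ℕ) (f : F) (i : ℕ) : CRule (SSym F V) (WVar V) :=
  ⟨Term.app (SSym.orig f)
     (((List.range (ar f)).map
         (fun q => if q = i then guardT (.var (Sum.inr q)) else .var (Sum.inr q))) ++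
      (List.range (mOf f)).map (fun q => .var (Sum.inr (ar f + q)))),
   guardT (Term.app (SSym.orig f)
     (((List.range (ar f)).map (fun q => Term.var (Sum.inr q))) ++
      List.replicate (mOf f) botT)),
   []⟩

/-- The SR transformation `SR(R)`: the unconditional TRS over `F̄` consisting of
the transformed rules of `R` together with the auxiliary rules `R_aux`. -/
def SRSys {F V : Type} [DecidableEq V] (R : CTRS F V) (ar mOf : F → ℕ)
    (idx : CRule F V → ℕ) : CTRS (SSym F V) (WVar V) :=
  { r | (∃ ρ ∈ R, ρ.conds = [] ∧ r = uncondSRRule mOf ρ) ∨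
        (∃ ρ ∈ R, ρ.conds ≠ [] ∧ ∃ j ≤ ρ.conds.length, r = condSRRule mOf idx ρ j) ∨
        r = auxGuard ∨
        (∃ (f : F) (i : ℕ), i < ar f ∧ r = auxShift ar mOf f i) }

/-- Well-formedness of the data `(ar, mOf, idx)` describing the signature `F`
(with arities `ar`), the number `mOf f` of conditional `f`-rules of `R`, and
the ranking `idx` of the conditional rules of each defined symbol by some
arbitrary but fixed order. -/
def GoodSetup {F V : Type} [DecidableEq V] (R : CTRS F V) (ar mOf : F → ℕ)
    (idx : CRule F V → ℕ) : Prop :=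
  (∀ ρ ∈ R, ρ.lhs.WF ar ∧ ρ.rhs.WF ar ∧ ∀ c ∈ ρ.conds, c.1.WF ar ∧ c.2.WF ar) ∧
  (∀ ρ ∈ R, ∃ (f : F) (ws : List (Term F V)), ρ.lhs = Term.app f ws) ∧
  (∀ ρ ∈ R, ρ.conds ≠ [] →
     ∀ (f : F) (ws : List (Term F V)), ρ.lhs = Term.app f ws →
       1 ≤ idx ρ ∧ idx ρ ≤ mOf f) ∧
  (∀ ρ₁, ρ₁ ∈ R → ∀ ρ₂, ρ₂ ∈ R → ρ₁.conds ≠ [] → ρ₂.conds ≠ [] →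
     ∀ (f : F) (ws₁ ws₂ : List (Term F V)),
       ρ₁.lhs = Term.app f ws₁ → ρ₂.lhs = Term.app f ws₂ →
       idx ρ₁ = idx ρ₂ → ρ₁ = ρ₂) ∧
  (∀ (f : F) (i : ℕ), 1 ≤ i → i ≤ mOf f →
     ∃ ρ ∈ R, ρ.conds ≠ [] ∧ (∃ ws : List (Term F V), ρ.lhs = Term.app f ws) ∧ idx ρ = i)
/-- The unraveled system `U(R)` with its rules considered over the extended
variable set `WVar V` (so that it rewrites the terms in the image of `Φ`). -/
def USysW {F V : Type} [DecidableEq V] (R : CTRS F V) : CTRS (UF F V) (WVar V) :=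
  { r | ∃ r' ∈ USys R, r = r'.mapV Sum.inl }

/-- Membership in the set `Φ(t)`: `PhiMem R ar mOf idx t u` states that
`u ∈ Φ(t)`, where `Φ` is the mapping (defined mutually with the auxiliary
mapping `Ψ`) from reachable terms of `T(F̄,V)` to sets of terms of
`T(U_R(F),V)`:
* `Φ(x) = {x}` for a variable `x`;
* `Φ(⟨t⟩) = Φ(t)`;
* for an original symbol `f` applied to arguments `ts`, `Φ` contains
  `f(t'1,…,t'n)` for all `t'p ∈ Φ(tp)` of the first `ar f` arguments (this is
  the clause for constructors and the clause `Ψ(f̄(t⃗,⊥,…,⊥))` for defined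
  symbols), and
* for each `i`-th extra argument of a defined symbol `f` that is a tuple
  `[⟨t'⟩, t'1,…,t'_{nj}]^ρ_j` (where `ρ` is the `i`-th conditional `f`-rule),
  `Φ` contains all terms `U^ρ_j(u', u⃗')` with `u' ∈ Φ(t')` and
  `u⃗' ∈ Φ(σ(X⃗j))`, where `σ` is a substitution with `σ(V⃗j) = t'1,…,t'_{nj}`
  and `σ(ext(w1),…,ext(wn))` equal to the main arguments of the node. -/
inductive PhiMem {F V : Type} [DecidableEq V] (R : CTRS F V) (ar mOf : F → ℕ)
    (idx : CRule F V → ℕ) : STerm F V → Term (UF F V) (WVar V) → Prop where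
  | var (x : WVar V) : PhiMem R ar mOf idx (.var x) (.var x)
  | guard {t : STerm F V} {u : Term (UF F V) (WVar V)} :
      PhiMem R ar mOf idx t u → PhiMem R ar mOf idx (guardT t) u
  | orig {f : F} {ts : List (STerm F V)} {us : List (Term (UF F V) (WVar V))} :
      us.length = (ts.take (ar f)).length →
      (∀ p ∈ List.zip (ts.take (ar f)) us, PhiMem R ar mOf idx p.1 p.2) →
      PhiMem R ar mOf idx (.app (.orig f) ts) (.app (Sum.inl f) us)
  | cond {f : F} {ts : List (STerm F V)} {ρ : CRule F V} {ws : List (Term F V)}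
      {j : ℕ} {tin : STerm F V} {vargs : List (STerm F V)}
      {σ : WVar V → STerm F V} {u : Term (UF F V) (WVar V)}
      {us : List (Term (UF F V) (WVar V))} :
      ρ ∈ R → ρ.conds ≠ [] → ρ.lhs = .app f ws →
      1 ≤ j → j ≤ ρ.conds.length →
      (ts.drop (ar f))[idx ρ - 1]? = some (.app (.tup ρ j) (guardT tin :: vargs)) →
      (Vlist ρ j).map (fun v => σ (Sum.inl v)) = vargs →
      (extTList mOf ws 0).1.map (Term.subst σ) = ts.take (ar f) →
      PhiMem R ar mOf idx tin u →
      us.length = (Xlist ρ j).length →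
      (∀ p ∈ List.zip (Xlist ρ j) us, PhiMem R ar mOf idx (σ (Sum.inl p.1)) p.2) →
      PhiMem R ar mOf idx (.app (.orig f) ts) (.app (Sum.inr (ρ, j)) (u :: us))

/-- The set `Φ(t)`. -/
def Phi {F V : Type} [DecidableEq V] (R : CTRS F V) (ar mOf : F → ℕ)
    (idx : CRule F V → ℕ) (t : STerm F V) : Set (Term (UF F V) (WVar V)) :=
  { u | PhiMem R ar mOf idx t u }

/-- `σ' ∈ Φ(σ)`, the extension of `Φ` to substitutions:
`Dom(σ') ⊆ Dom(σ)` and `xσ' ∈ Φ(xσ)` for every `x ∈ Dom(σ)`. -/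
def PhiSub {F V : Type} [DecidableEq V] (R : CTRS F V) (ar mOf : F → ℕ)
    (idx : CRule F V → ℕ) (σ : WVar V → STerm F V)
    (σ' : WVar V → Term (UF F V) (WVar V)) : Prop :=
  ∀ x : WVar V, PhiMem R ar mOf idx (σ x) (σ' x)

/-- The relation `s ⇝ t`: for each `t' ∈ Φ(t)` there exists `s' ∈ Φ(s)` with
`s' →*_{U(R)} t'`. -/
def Leadsto {F V : Type} [DecidableEq V] (R : CTRS F V) (ar mOf : F → ℕ)
    (idx : CRule F V → ℕ) (s t : STerm F V) : Prop :=
  ∀ u, PhiMem R ar mOf idx t u →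
    ∃ u', PhiMem R ar mOf idx s u' ∧ RedStar (USysW R) u' u

/-- A term of `T(F̄,V)` is reachable if it is a subterm of some term reachable
by `SR(R)` from `⟨s̄⟩` for some `s ∈ T(F,V)`. -/
def SRReachable {F V : Type} [DecidableEq V] (R : CTRS F V) (ar mOf : F → ℕ)
    (idx : CRule F V → ℕ) (t : STerm F V) : Prop :=
  ∃ (s : Term F V) (C : Ctx (SSym F V) (WVar V)),
    s.WF ar ∧ RedStar (SRSys R ar mOf idx) (guardT (barT mOf s)) (C.fill t)

/-- The restriction `σ|_X` of a substitution to the variables of a term `t`. -/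
def restrictTo {F V : Type} [DecidableEq V] (σ : WVar V → STerm F V) (t : STerm F V) :
    WVar V → STerm F V :=
  fun x => if 0 < t.count x then σ x else .var x

/-! Fix a source term `u` of `R` for each target term `t` reached by `SR(R)`, in such a way that
`u` *simulates* `t`: `u` reduces to the backtranslation of `t`, and for every tuple `[e₀, v⃗]^ρ_j`
pending in an extra argument of `t` there is a substitution `σ` such that `u` reduces to `lσ`, the
first `j - 1` conditions of `ρ` hold under `σ`, and `s_jσ` and `V⃗_jσ` simulate `e₀` and `v⃗`.
Starting with `s` and `⟨s̄⟩`, an `SR(R)`-step from `t` to `t'` never requires a new `u`: whatever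
simulates `t` simulates `t'`.

The only delicate steps are those that match a pattern `l` or `t_j` against the target.  A nonlinear
pattern gets instances that agree in the target but that are simulated by different source terms.
These are unified by reducing all of them to their common backtranslation.  This forgets pending
conditions, which is harmless: a variable occurring twice in the left-hand side of an unraveled rule
does not occur in its right-hand side because `U(R)` is weakly left-linear.  Finally, a variable of
`t_j` may have to be rebound when `t_j` is matched, and this does not invalidate the earlier
conditions because `R` itself is weakly left-linear, so that such a variable occurs in no
`s_1, …, s_j`. -/

namespace Term

variable {F G V W : Type}

@[induction_eliminator]
theorem induction {P : Term F V → Prop} (var : ∀ x, P (.var x))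
    (app : ∀ f ts, (∀ t ∈ ts, P t) → P (.app f ts)) : ∀ t, P t
  | .var x => var x
  | .app f ts => app f ts fun t _ => induction var app t

@[simp]
theorem subst_var (σ : V → Term F W) (x : V) : (var x : Term F V).subst σ = σ x := by
  rw [subst]

@[simp]
theorem subst_app (σ : V → Term F W) (f : F) (ts : List (Term F V)) :
    (app f ts).subst σ = app f (ts.map (subst σ)) := by
  rw [subst, List.attach_map_val (f := subst σ)]

theorem mapF_app (g : F → G) (f : F) (ts : List (Term F V)) :
    (app f ts).mapF g = app (g f) (ts.map (mapF g)) := by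
  rw [mapF, List.attach_map_val (f := mapF g)]

@[simp]
theorem varList_var (x : V) : (var x : Term F V).varList = [x] := by
  rw [varList]

@[simp]
theorem varList_app (f : F) (ts : List (Term F V)) :
    (app f ts).varList = ts.flatMap varList := by
  rw [varList, List.flatMap, List.attach_map_val (f := varList), List.flatMap]

theorem varList_mapF (g : F → G) (t : Term F V) : (t.mapF g).varList = t.varList := by
  induction t with
  | var x => rw [mapF, varList_var, varList_var]
  | app f ts ih =>
    rw [mapF_app, varList_app, varList_app, List.flatMap_map]
    exact List.flatMap_congr ih

theorem count_eq_count_varList [DecidableEq V] (x : V) (t : Term F V) :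
    t.count x = t.varList.count x := by
  induction t with
  | var y => simp only [count, varList_var, List.count_singleton, beq_iff_eq]
  | app f ts ih =>
    rw [count, List.attach_map_val (f := count x), varList_app, List.count_flatMap,
      List.map_congr_left ih]
    rfl

theorem count_pos_iff [DecidableEq V] {x : V} {t : Term F V} : 0 < t.count x ↔ x ∈ t.varList := by
  rw [count_eq_count_varList, List.count_pos_iff]

theorem subst_congr {σ τ : V → Term F W} {t : Term F V} (h : ∀ x ∈ t.varList, σ x = τ x) :
    t.subst σ = t.subst τ := by
  induction t with
  | var x => simpa using h x
  | app f ts ih =>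
    rw [subst_app, subst_app, List.map_congr_left fun t ht => ih t ht fun x hx =>
      h x (varList_app f ts ▸ List.mem_flatMap_of_mem ht hx)]

theorem subst_id (t : Term F V) : t.subst var = t := by
  induction t with
  | var x => rw [subst_var]
  | app f ts ih => rw [subst_app, List.map_congr_left ih, List.map_id']

end Term

theorem seqCount_eq_count_flatMap {F V : Type} [DecidableEq V] (x : V) (ts : List (Term F V)) :
    seqCount x ts = (ts.flatMap Term.varList).count x := by
  rw [seqCount, List.count_flatMap,
    List.map_congr_left fun t _ => Term.count_eq_count_varList x t]
  rfl

section ForallTwo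

variable {α β γ : Type}

theorem forall₂_comp {r : α → β → Prop} {p : β → γ → Prop} {as : List α} {bs : List β}
    {cs : List γ} (hab : List.Forall₂ r as bs) (hbc : List.Forall₂ p bs cs) :
    List.Forall₂ (fun a c => ∃ b, r a b ∧ p b c) as cs := by
  induction hab generalizing cs with
  | nil => cases hbc; exact .nil
  | cons h _ ih => cases hbc with | cons h' ht => exact .cons ⟨_, h, h'⟩ (ih ht)

theorem forall₂_imp_of_mem {r p : α → β → Prop} {as : List α} {bs : List β}
    (h : ∀ a ∈ as, ∀ b ∈ bs, r a b → p a b) (hr : List.Forall₂ r as bs) : List.Forall₂ p as bs :=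
  List.forall₂_iff_zip.2 ⟨hr.length_eq, fun hab =>
    h _ (List.of_mem_zip hab).1 _ (List.of_mem_zip hab).2 (List.forall₂_zip hr hab)⟩

theorem exists_mem_of_forall₂ {r : α → β → Prop} {as : List α} {bs : List β}
    (h : List.Forall₂ r as bs) {b : β} (hb : b ∈ bs) : ∃ a ∈ as, r a b := by
  rw [← List.map_snd_zip h.length_eq.ge, List.mem_map] at hb
  obtain ⟨⟨a, b⟩, hab, rfl⟩ := hb
  exact ⟨a, (List.of_mem_zip hab).1, List.forall₂_zip h hab⟩

theorem exists_mem_zip_of_forall₂ {r : α → β → Prop} {cs : List γ} {as : List α} {bs : List β}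
    (h : List.Forall₂ r as bs) {c : γ} {b : β} (hcb : (c, b) ∈ cs.zip bs) :
    ∃ a, (c, a) ∈ cs.zip as ∧ r a b := by
  obtain ⟨i, hi, hcbi⟩ := List.mem_iff_getElem.1 hcb
  rw [List.getElem_zip, Prod.mk.injEq] at hcbi
  rw [List.length_zip, lt_min_iff] at hi
  have hia : i < as.length := h.length_eq ▸ hi.2
  refine ⟨as[i], List.mem_iff_getElem.2 ⟨i, by rw [List.length_zip]; exact lt_min hi.1 hia, ?_⟩, ?_⟩
  · rw [List.getElem_zip, hcbi.1]
  · exact hcbi.2 ▸ h.get hia hi.2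

theorem exists_mapM_eq_some_of_forall₂ {g : β → Option γ} {r : α → γ → Prop} {as : List α}
    {bs : List β} (h : List.Forall₂ (fun a b => ∃ c, g b = some c ∧ r a c) as bs) :
    ∃ cs, bs.mapM g = some cs ∧ List.Forall₂ r as cs := by
  induction h with
  | nil => exact ⟨[], rfl, .nil⟩
  | cons h _ ih =>
    obtain ⟨c, hc, hr⟩ := h
    obtain ⟨cs, hcs, hrs⟩ := ih
    exact ⟨c :: cs, by simp [List.mapM_cons, hc, hcs], .cons hr hrs⟩

end ForallTwo

section Reduction

variable {F V : Type}

theorem CtxStep.mono {r p : Term F V → Term F V → Prop} (h : r ≤ p) : CtxStep r ≤ CtxStep p := by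
  intro a b hab
  induction hab with
  | root hab => exact .root (h _ _ hab)
  | congr _ ih => exact .congr ih

variable {R : CTRS F V}

theorem RootStep.mono {r p : Term F V → Term F V → Prop} (h : r ≤ p) :
    RootStep R r ≤ RootStep R p := fun _ _ ⟨ρ, hρ, σ, hl, hr, hc⟩ =>
  ⟨ρ, hρ, σ, hl, hr, fun c hcρ => Relation.ReflTransGen.mono h _ _ (hc c hcρ)⟩

variable (R) in
theorem monotone_levelStep : Monotone (LevelStep R) := by
  refine monotone_nat_of_le_succ fun n => ?_
  induction n with
  | zero => exact fun _ _ h => h.elim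
  | succ n ih => exact CtxStep.mono (RootStep.mono ih)

namespace RedStar

open Filter in
theorem eventually_levelStep {a b : Term F V} (h : RedStar R a b) :
    ∀ᶠ n in atTop, Relation.ReflTransGen (LevelStep R n) a b := by
  induction h with
  | refl => exact .of_forall fun _ => .refl
  | tail _ h ih =>
    obtain ⟨m, hm⟩ := h
    filter_upwards [ih, eventually_ge_atTop m] with n hn hmn
    exact hn.tail (monotone_levelStep R hmn _ _ hm)

theorem rule {ρ : CRule F V} (hρ : ρ ∈ R) {σ : V → Term F V}
    (h : ∀ c ∈ ρ.conds, RedStar R (c.1.subst σ) (c.2.subst σ)) :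
    RedStar R (ρ.lhs.subst σ) (ρ.rhs.subst σ) := by
  obtain ⟨n, hn⟩ := ((Filter.eventually_all_finite ρ.conds.finite_toSet).2
    fun c hc => (h c hc).eventually_levelStep).exists
  exact .single ⟨n + 1, .root ⟨ρ, hρ, σ, rfl, rfl, hn⟩⟩

theorem congr {a b : Term F V} (f : F) (pre post : List (Term F V)) (h : RedStar R a b) :
    RedStar R (.app f (pre ++ a :: post)) (.app f (pre ++ b :: post)) := by
  refine h.lift (fun t => Term.app f (pre ++ t :: post)) fun _ _ ⟨n, hn⟩ => ?_
  cases n with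
  | zero => exact hn.elim
  | succ n => exact ⟨n + 1, .congr hn⟩

theorem app (f : F) {us vs : List (Term F V)} (h : List.Forall₂ (RedStar R) us vs) :
    RedStar R (.app f us) (.app f vs) := by
  suffices ∀ pre, RedStar R (.app f (pre ++ us)) (.app f (pre ++ vs)) from this []
  induction h with
  | nil => exact fun _ => .refl
  | @cons u v us vs huv _ ih =>
    intro pre
    have := ih (pre ++ [v])
    rw [List.append_assoc, List.append_assoc] at this
    exact (huv.congr f pre us).trans this

theorem subst {σ τ : V → Term F V} {t : Term F V} (h : ∀ x ∈ t.varList, RedStar R (σ x) (τ x)) :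
    RedStar R (t.subst σ) (t.subst τ) := by
  induction t with
  | var x => simpa using h x
  | app f ts ih =>
    rw [Term.subst_app, Term.subst_app]
    refine app f (List.forall₂_map_left_iff.2 (List.forall₂_map_right_iff.2
      (List.forall₂_same.2 fun t ht => ih t ht fun x hx => h x ?_)))
    exact Term.varList_app f ts ▸ List.mem_flatMap_of_mem ht hx

end RedStar

end Reduction

section TargetTerms

variable {F V : Type}

theorem hatT_orig (ar : F → ℕ) (f : F) (ts : List (STerm F V)) :
    hatT ar (.app (.orig f) ts) =
      Option.map (Term.app f) ((ts.take (ar f)).mapM (hatT ar)) := by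
  rw [hatT]; congr 1; simp

theorem subst_botT (τ : WVar V → STerm F V) : (botT : STerm F V).subst τ = botT := by
  rw [botT, Term.subst_app, List.map_nil]

theorem subst_guardT (τ : WVar V → STerm F V) (t : STerm F V) :
    (guardT t).subst τ = guardT (t.subst τ) := by
  rw [guardT, Term.subst_app, List.map_singleton, guardT]

theorem barT_app (mOf : F → ℕ) (f : F) (ts : List (Term F V)) :
    barT mOf (.app f ts) =
      .app (.orig f) (ts.map (barT mOf) ++ List.replicate (mOf f) botT) := by
  rw [barT, List.attach_map_val (f := barT mOf)]

end TargetTerms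

/-! ### The simulation relation -/

section Simulation

variable {F V : Type}

/-- The term `u` reduces to an instance of the left-hand side of `ρ` under `σ`, and `σ` satisfies
the first `j` conditions of `ρ`. -/
def FiresUpTo (R : CTRS F V) (ρ : CRule F V) (j : ℕ) (σ : V → Term F V) (u : Term F V) : Prop :=
  RedStar R u (ρ.lhs.subst σ) ∧ ∀ c ∈ ρ.conds.take j, RedStar R (c.1.subst σ) (c.2.subst σ)

theorem FiresUpTo.of_redStar {R : CTRS F V} {ρ : CRule F V} {j : ℕ} {σ : V → Term F V}
    {u u' : Term F V} (h : FiresUpTo R ρ j σ u) (hu : RedStar R u' u) : FiresUpTo R ρ j σ u' :=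
  ⟨hu.trans h.1, h.2⟩

theorem FiresUpTo.redStar_rhs {R : CTRS F V} {ρ : CRule F V} (hρ : ρ ∈ R) {σ : V → Term F V}
    {u : Term F V} (h : FiresUpTo R ρ ρ.conds.length σ u) : RedStar R u (ρ.rhs.subst σ) :=
  h.1.trans (RedStar.rule hρ (List.take_length (l := ρ.conds) ▸ h.2))

/-- `PatternBinds ar w t x b`: traversing the pattern `w` and the target term `t` in parallel, an
occurrence of the variable `x` in `w` meets the subterm `b` of `t`.  The extra arguments of `t` are
ignored, as the terms `ext(w)` have fresh variables there. -/
inductive PatternBinds (ar : F → ℕ) : Term F V → STerm F V → V → STerm F V → Prop where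
  | var (x : V) (t : STerm F V) : PatternBinds ar (.var x) t x t
  | app {f : F} {ws : List (Term F V)} {ts : List (STerm F V)} {w : Term F V} {t : STerm F V}
      {x : V} {b : STerm F V} : (w, t) ∈ ws.zip (ts.take (ar f)) → PatternBinds ar w t x b →
      PatternBinds ar (.app f ws) (.app (.orig f) ts) x b

theorem PatternBinds.mem_varList {ar : F → ℕ} {w : Term F V} {t b : STerm F V} {x : V}
    (h : PatternBinds ar w t x b) : x ∈ w.varList := by
  induction h with
  | var => rw [Term.varList_var, List.mem_singleton]
  | app hz _ ih => exact Term.varList_app _ _ ▸ List.mem_flatMap_of_mem (List.of_mem_zip hz).1 ih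

variable [DecidableEq V]

mutual

/-- `Simulates R ar u t`: the source term `u` reduces to the backtranslation of `t`, and it accounts
for all the conditional rules whose evaluation is pending in `t`. -/
inductive Simulates (R : CTRS F V) (ar : F → ℕ) : Term F V → STerm F V → Prop where
  | var {u : Term F V} {x : V} : RedStar R u (.var x) → Simulates R ar u (.var (Sum.inl x))
  | guard {u : Term F V} {t : STerm F V} : Simulates R ar u t → Simulates R ar u (.app .guard [t])
  | orig {u : Term F V} {f : F} {us : List (Term F V)} {args : List (STerm F V)} :
      RedStar R u (.app f us) → List.Forall₂ (Simulates R ar) us (args.take (ar f)) →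
      (∀ e ∈ args.drop (ar f), SlotSimulates R ar u (.app (.orig f) args) e) →
      Simulates R ar u (.app (.orig f) args)

/-- `SlotSimulates R ar u t e`: the source term `u` accounts for the extra argument `e` of the
target term `t`, which is `⊥` or a tuple `[e₀, v⃗]^ρ_{j+1}`.  The values of the variables of the
left-hand side of `ρ` are not stored in the tuple but in the other arguments of `t`. -/
inductive SlotSimulates (R : CTRS F V) (ar : F → ℕ) :
    Term F V → STerm F V → STerm F V → Prop where
  | bot {u : Term F V} {t : STerm F V} : SlotSimulates R ar u t (.app .bot [])
  | tup {u : Term F V} {t e₀ : STerm F V} {vs : List (STerm F V)} {ρ : CRule F V} {j : ℕ}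
      {c : Term F V × Term F V} {σ : V → Term F V} :
      ρ ∈ R → ρ.conds[j]? = some c → FiresUpTo R ρ j σ u → Simulates R ar (c.1.subst σ) e₀ →
      List.Forall₂ (Simulates R ar) ((Vlist ρ (j + 1)).map σ) vs →
      (∀ x b, PatternBinds ar ρ.lhs t x b → Simulates R ar (σ x) b) →
      SlotSimulates R ar u t (.app (.tup ρ (j + 1)) (e₀ :: vs))

end

variable {R : CTRS F V} {ar mOf : F → ℕ}

theorem SlotSimulates.of_redStar {u u' : Term F V} {t e : STerm F V}
    (h : SlotSimulates R ar u t e) (hu : RedStar R u' u) : SlotSimulates R ar u' t e := by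
  cases h with
  | bot => exact .bot
  | tup hρ hc hfire he hV hlhs => exact .tup hρ hc (hfire.of_redStar hu) he hV hlhs

theorem simulates_guardT_iff {u : Term F V} {t : STerm F V} :
    Simulates R ar u (guardT t) ↔ Simulates R ar u t :=
  ⟨fun h => by cases h; assumption, .guard⟩

theorem Simulates.of_redStar {u u' : Term F V} {t : STerm F V} (h : Simulates R ar u t)
    (hu : RedStar R u' u) : Simulates R ar u' t := by
  induction t using Term.induction with
  | var x => cases h with | var h => exact .var (hu.trans h)
  | app g ts ih =>
    cases h with
    | guard h => exact .guard (ih _ (List.mem_singleton_self _) h)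
    | orig hred hargs hslots =>
      exact .orig (hu.trans hred) hargs fun e he => (hslots e he).of_redStar hu

theorem Simulates.exists_hatT_eq_some {u : Term F V} {t : STerm F V} (h : Simulates R ar u t) :
    ∃ v, hatT ar t = some v ∧ RedStar R u v := by
  induction t using Term.induction generalizing u with
  | var x => cases h with | @var _ x h => exact ⟨.var x, by rw [hatT], h⟩
  | app g ts ih =>
    cases h with
    | guard h => rw [hatT]; exact ih _ (List.mem_singleton_self _) h
    | @orig _ f us _ hred hargs _ =>
      obtain ⟨vs, hvs, hred'⟩ := exists_mapM_eq_some_of_forall₂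
        (forall₂_imp_of_mem (fun v _ t ht (hvt : Simulates R ar v t) =>
          ih t (List.mem_of_mem_take ht) hvt) hargs)
      exact ⟨.app f vs, by rw [hatT_orig, hvs, Option.map_some], hred.trans (RedStar.app f hred')⟩

theorem Simulates.subst_barT {s : Term F V} (hs : s.WF ar) {σ : V → Term F V}
    {τ : WVar V → STerm F V} (h : ∀ x ∈ s.varList, Simulates R ar (σ x) (τ (Sum.inl x))) :
    Simulates R ar (s.subst σ) ((barT mOf s).subst τ) := by
  induction s with
  | var x => simpa [barT] using h
  | app f ts ih =>
    cases hs with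
    | app _ _ hlen hts =>
      rw [barT_app, Term.subst_app, Term.subst_app, List.map_append, List.map_map,
        List.map_replicate, subst_botT]
      refine .orig .refl ?_ ?_
      · rw [List.take_left' (by simpa using hlen), List.forall₂_map_left_iff,
          List.forall₂_map_right_iff, List.forall₂_same]
        exact fun t ht => ih t ht (hts t ht) fun x hx =>
          h x (Term.varList_app f ts ▸ List.mem_flatMap_of_mem ht hx)
      · rw [List.drop_left' (by simpa using hlen)]
        exact fun e he => (List.eq_of_mem_replicate he).symm ▸ .bot

end Simulation

/-! ### Matching the extended patterns -/

section Matching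

variable {F V : Type} {R : CTRS F V} {ar mOf : F → ℕ}

/-- `ExtMatch ar τ w t`: the target term `t` is an instance of `ext(w)` whose substitution coincides
with `τ` on the variables of `w`. -/
inductive ExtMatch (ar : F → ℕ) (τ : V → STerm F V) : Term F V → STerm F V → Prop where
  | var (x : V) : ExtMatch ar τ (.var x) (τ x)
  | app {f : F} {ws : List (Term F V)} {args : List (STerm F V)} :
      List.Forall₂ (ExtMatch ar τ) ws (args.take (ar f)) →
      ExtMatch ar τ (.app f ws) (.app (.orig f) args)

theorem PatternBinds.eq_of_extMatch {τ : V → STerm F V} {w : Term F V} {t b : STerm F V} {x : V}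
    (h : PatternBinds ar w t x b) (hm : ExtMatch ar τ w t) : b = τ x := by
  induction h with
  | var x t => cases hm; rfl
  | app hz _ ih => cases hm with | app hm => exact ih (List.forall₂_zip hm hz)

theorem ExtMatch.patternBinds {τ : V → STerm F V} {w : Term F V} {t : STerm F V}
    (hm : ExtMatch ar τ w t) {x : V} (hx : x ∈ w.varList) : PatternBinds ar w t x (τ x) := by
  induction w generalizing t with
  | var y =>
    cases hm
    rw [Term.varList_var, List.mem_singleton] at hx
    exact hx.symm ▸ .var y _
  | app f ws ih =>
    cases hm with
    | @app _ _ args hm =>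
      rw [Term.varList_app, List.mem_flatMap] at hx
      obtain ⟨w, hw, hx⟩ := hx
      rw [← List.map_fst_zip hm.length_eq.le, List.mem_map] at hw
      obtain ⟨⟨w, t⟩, hz, rfl⟩ := hw
      exact .app hz (ih w (List.of_mem_zip hz).1 (List.forall₂_zip hm hz) hx)

theorem forall₂_extTList {P : Term F V → STerm F V → Prop} {ws : List (Term F V)}
    (h : ∀ w ∈ ws, ∀ c, P w (extT mOf w c).1) (c : ℕ) :
    List.Forall₂ P ws (extTList mOf ws c).1 := by
  induction ws generalizing c with
  | nil => rw [extTList]; exact .nil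
  | cons w ws ih =>
    rw [List.forall_mem_cons] at h
    rw [extTList]
    exact .cons (h.1 c) (ih h.2 _)

theorem extMatch_extT {w : Term F V} (hw : w.WF ar) (τ : WVar V → STerm F V) (c : ℕ) :
    ExtMatch ar (fun x => τ (Sum.inl x)) w ((extT mOf w c).1.subst τ) := by
  induction w generalizing c with
  | var x => rw [extT, Term.subst_var]; exact .var x
  | app f ws ih =>
    cases hw with
    | app _ _ hlen hws =>
      have hmatch := forall₂_extTList (mOf := mOf)
        (P := fun w t => ExtMatch ar (fun x => τ (Sum.inl x)) w (t.subst τ))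
        (fun w hw => ih w hw (hws w hw)) c
      rw [extT, Term.subst_app, List.map_append]
      refine .app ?_
      rwa [List.take_left' (by rw [List.length_map, ← hmatch.length_eq, hlen]),
        List.forall₂_map_right_iff]

theorem forall₂_extMatch_extTList {ws : List (Term F V)} (hws : ∀ w ∈ ws, w.WF ar)
    (τ : WVar V → STerm F V) (c : ℕ) :
    List.Forall₂ (ExtMatch ar fun x => τ (Sum.inl x)) ws
      ((extTList mOf ws c).1.map (Term.subst τ)) :=
  List.forall₂_map_right_iff.2
    (forall₂_extTList (fun w hw c => extMatch_extT (hws w hw) τ c) c)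

variable [DecidableEq V]

/-- `Tracks R ar p t v`: the source term `v` is an admissible value for a variable that is bound to
the target term `t`.  If the variable is still needed, as expressed by `p`, then `v` simulates `t`;
otherwise `v` is the backtranslation of `t`, so that different occurrences of the variable agree. -/
def Tracks (R : CTRS F V) (ar : F → ℕ) (p : Prop) (t : STerm F V) (v : Term F V) : Prop :=
  (p → Simulates R ar v t) ∧ (¬ p → hatT ar t = some v)

theorem Simulates.exists_tracks {u : Term F V} {t : STerm F V} (h : Simulates R ar u t)
    (p : Prop) : ∃ v, RedStar R u v ∧ Tracks R ar p t v := by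
  by_cases hp : p
  · exact ⟨u, .refl, fun _ => h, absurd hp⟩
  · obtain ⟨v, hv, hred⟩ := h.exists_hatT_eq_some
    exact ⟨v, hred, fun hp' => absurd hp' hp, fun _ => hv⟩

theorem Tracks.eq_of_not {p : Prop} {t : STerm F V} {v v' : Term F V} (hp : ¬ p)
    (h : Tracks R ar p t v) (h' : Tracks R ar p t v') : v = v' :=
  Option.some_injective _ ((h.2 hp).symm.trans (h'.2 hp))

theorem exists_tracks_cons {τ : V → STerm F V} {B : V → Prop} {w : Term F V}
    {ws : List (Term F V)} (hB : ∀ x, B x → ((w :: ws).flatMap Term.varList).count x ≤ 1)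
    {σ₁ σ₂ : V → Term F V} (h₁ : ∀ x ∈ w.varList, Tracks R ar (B x) (τ x) (σ₁ x))
    (h₂ : ∀ x ∈ ws.flatMap Term.varList, Tracks R ar (B x) (τ x) (σ₂ x)) :
    ∃ σ, w.subst σ = w.subst σ₁ ∧ ws.map (Term.subst σ) = ws.map (Term.subst σ₂) ∧
      ∀ x ∈ (w :: ws).flatMap Term.varList, Tracks R ar (B x) (τ x) (σ x) := by
  set σ := w.varList.toFinset.piecewise σ₁ σ₂
  have on_w : ∀ x ∈ w.varList, σ x = σ₁ x := fun x hx =>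
    Finset.piecewise_eq_of_mem _ _ _ (List.mem_toFinset.2 hx)
  have on_ws : ∀ x ∈ ws.flatMap Term.varList, σ x = σ₂ x := by
    intro x hx
    by_cases hxw : x ∈ w.varList
    · have hBx : ¬ B x := fun hBx => by
        have := hB x hBx
        rw [List.flatMap_cons, List.count_append] at this
        have := List.count_pos_iff.2 hx
        have := List.count_pos_iff.2 hxw
        omega
      rw [on_w x hxw, (h₁ x hxw).eq_of_not hBx (h₂ x hx)]
    · exact Finset.piecewise_eq_of_notMem _ _ _ (mt List.mem_toFinset.1 hxw)
  refine ⟨σ, Term.subst_congr on_w, List.map_congr_left fun v hv =>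
    Term.subst_congr fun x hx => on_ws x (List.mem_flatMap_of_mem hv hx), fun x hx => ?_⟩
  rw [List.flatMap_cons, List.mem_append] at hx
  rcases hx with hx | hx
  · exact on_w x hx ▸ h₁ x hx
  · exact on_ws x hx ▸ h₂ x hx

theorem exists_tracks_of_forall₂ {τ : V → STerm F V} {B : V → Prop} {ws us : List (Term F V)}
    (hB : ∀ x, B x → (ws.flatMap Term.varList).count x ≤ 1)
    (h : List.Forall₂ (fun w u => (∀ x, B x → w.varList.count x ≤ 1) →
      ∃ σ, RedStar R u (w.subst σ) ∧ ∀ x ∈ w.varList, Tracks R ar (B x) (τ x) (σ x)) ws us) :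
    ∃ σ, List.Forall₂ (RedStar R) us (ws.map (Term.subst σ)) ∧
      ∀ x ∈ ws.flatMap Term.varList, Tracks R ar (B x) (τ x) (σ x) := by
  induction h with
  | nil => exact ⟨Term.var, .nil, fun x hx => absurd hx List.not_mem_nil⟩
  | cons h _ ih =>
    have hB' := hB
    simp only [List.flatMap_cons, List.count_append] at hB'
    obtain ⟨σ₁, hred₁, htr₁⟩ := h fun x hx => (Nat.le_add_right _ _).trans (hB' x hx)
    obtain ⟨σ₂, hred₂, htr₂⟩ := ih fun x hx => (Nat.le_add_left _ _).trans (hB' x hx)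
    obtain ⟨σ, hσ₁, hσ₂, htr⟩ := exists_tracks_cons hB htr₁ htr₂
    exact ⟨σ, .cons (hσ₁ ▸ hred₁) (hσ₂ ▸ hred₂), htr⟩

theorem ExtMatch.exists_tracks {τ : V → STerm F V} {w u : Term F V} {t : STerm F V}
    (hm : ExtMatch ar τ w t) (hu : Simulates R ar u t) {B : V → Prop}
    (hB : ∀ x, B x → w.varList.count x ≤ 1) :
    ∃ σ, RedStar R u (w.subst σ) ∧ ∀ x ∈ w.varList, Tracks R ar (B x) (τ x) (σ x) := by
  induction w generalizing t u with
  | var x =>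
    cases hm
    obtain ⟨v, hred, htr⟩ := hu.exists_tracks (B x)
    refine ⟨fun _ => v, (Term.subst_var _ x).symm ▸ hred, fun y hy => ?_⟩
    rw [Term.varList_var, List.mem_singleton] at hy
    exact hy ▸ htr
  | app f ws ih =>
    cases hm with
    | app hm =>
      cases hu with
      | orig hred hargs _ =>
        rw [Term.varList_app] at hB ⊢
        obtain ⟨σ, hred', htr⟩ := exists_tracks_of_forall₂ hB
          (forall₂_imp_of_mem (fun w hw _ _ ⟨_, hwt, hut⟩ => ih w hw hwt hut)
            (forall₂_comp hm hargs.flip))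
        exact ⟨σ, hred.trans (Term.subst_app σ f ws ▸ RedStar.app f hred'), htr⟩

end Matching

/-! ### Variables of the unraveled rules -/

section Unraveling

variable {F V : Type} [DecidableEq V] {ρ : CRule F V} {j : ℕ} {c : Term F V × Term F V}

variable (ρ) in
theorem varList_uterm (i : ℕ) (t : Term F V) :
    (uterm ρ i t).varList = t.varList ++ Xlist ρ i := by
  rw [uterm, Term.varList_app, List.flatMap_cons, liftF, Term.varList_mapF, List.flatMap_map]
  simp only [Term.varList_var, List.flatMap_singleton']

variable (ρ) in
theorem varList_ulhs_zero : (ulhs ρ 0).varList = ρ.lhs.varList := by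
  rw [ulhs, if_pos rfl, liftF, Term.varList_mapF]

theorem varList_ulhs_succ (hc : ρ.conds[j]? = some c) :
    (ulhs ρ (j + 1)).varList = c.2.varList ++ Xlist ρ (j + 1) := by
  rw [ulhs, if_neg j.succ_ne_zero, varList_uterm, Nat.add_sub_cancel, List.getD_eq_getElem?_getD,
    hc, Option.getD_some]

variable (ρ) in
theorem varList_urhs_length : (urhs ρ ρ.conds.length).varList = ρ.rhs.varList := by
  rw [urhs, if_pos rfl, liftF, Term.varList_mapF]

theorem varList_urhs (hc : ρ.conds[j]? = some c) :
    (urhs ρ j).varList = c.1.varList ++ Xlist ρ (j + 1) := by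
  obtain ⟨hj, -⟩ := List.getElem?_eq_some_iff.1 hc
  rw [urhs, if_neg hj.ne, varList_uterm, List.getD_eq_getElem?_getD, hc, Option.getD_some]

theorem mem_Xlist_iff {i : ℕ} {x : V} :
    x ∈ Xlist ρ i ↔ x ∈ ρ.lhs.varList ∨ x ∈ Vlist ρ i := by
  rw [Xlist, Vlist, List.mem_dedup, List.mem_dedup, List.mem_append]

theorem mem_Vlist_succ_iff {x : V} :
    x ∈ Vlist ρ (j + 1) ↔ ∃ c ∈ ρ.conds.take j, x ∈ c.2.varList := by
  simp only [Vlist, Nat.add_sub_cancel, List.mem_dedup, List.mem_flatMap, List.mem_map,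
    exists_exists_and_eq_and]

theorem Xlist_succ_subset_succ {i : ℕ} (hij : i ≤ j) : Xlist ρ (i + 1) ⊆ Xlist ρ (j + 1) := by
  intro x
  rw [mem_Xlist_iff, mem_Xlist_iff, mem_Vlist_succ_iff, mem_Vlist_succ_iff]
  exact Or.imp_right fun ⟨c, hc, hx⟩ => ⟨c, List.take_subset_take_left _ hij hc, hx⟩

theorem mem_Xlist_of_mem_varList (hc : ρ.conds[j]? = some c) {x : V} (hx : x ∈ c.2.varList) :
    x ∈ Xlist ρ (j + 2) := by
  rw [mem_Xlist_iff, mem_Vlist_succ_iff]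
  have hc' : (ρ.conds.take (j + 1))[j]? = some c := by
    rwa [List.getElem?_take_of_lt j.lt_succ_self]
  exact .inr ⟨c, List.mem_of_getElem? hc', hx⟩

theorem CRule.WLL.notMem_varList (hW : ρ.WLL) (hc : ρ.conds[j]? = some c) {x : V}
    (hX : x ∈ Xlist ρ (j + 1)) {d : Term F V × Term F V} (hd : d ∈ ρ.conds)
    (hx : x ∈ d.1.varList) : x ∉ c.2.varList := by
  intro hxc
  have hsrc : 0 < seqCount x ρ.srcs := by
    rw [seqCount_eq_count_flatMap, List.count_pos_iff]
    exact List.mem_flatMap_of_mem (List.mem_cons_of_mem _ (List.mem_map_of_mem hd)) hx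
  have hone := hW x hsrc
  obtain ⟨hj, rfl⟩ := List.getElem?_eq_some_iff.1 hc
  rw [Xlist, Nat.add_sub_cancel, List.mem_dedup, ← List.count_pos_iff, List.count_append] at hX
  rw [seqCount_eq_count_flatMap, pats, ← List.take_append_drop j ρ.conds,
    List.drop_eq_getElem_cons hj] at hone
  simp only [List.map_append, List.map_cons, List.flatMap_cons, List.flatMap_append,
    List.count_append] at hone
  have := List.count_pos_iff.2 hxc
  omega

variable {R : CTRS F V}

theorem IsUWLL.count_ulhs (hU : IsUWLL R) (hρ : ρ ∈ R) (hj : j ≤ ρ.conds.length) {x : V}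
    (hx : x ∈ (urhs ρ j).varList) : (ulhs ρ j).varList.count x = 1 := by
  have := hU ⟨ulhs ρ j, urhs ρ j, []⟩ (Set.mem_biUnion hρ ⟨j, hj, rfl⟩) x
  simp only [seqCount_eq_count_flatMap, CRule.srcs, CRule.pats, List.map_nil,
    List.flatMap_singleton, List.count_pos_iff] at this
  exact this hx

theorem IsUWLL.mem_varList_ulhs (hU : IsUWLL R) (hρ : ρ ∈ R) (hj : j ≤ ρ.conds.length) {x : V}
    (hx : x ∈ (urhs ρ j).varList) : x ∈ (ulhs ρ j).varList :=
  List.count_pos_iff.1 (hU.count_ulhs hρ hj hx ▸ Nat.one_pos)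

theorem IsUWLL.mem_Xlist (hU : IsUWLL R) (hρ : ρ ∈ R) (hj : j ≤ ρ.conds.length) {x : V}
    (hx : x ∈ (urhs ρ j).varList) : x ∈ Xlist ρ (j + 1) := by
  have hx := hU.mem_varList_ulhs hρ hj hx
  cases j with
  | zero => exact mem_Xlist_iff.2 (.inl (varList_ulhs_zero ρ ▸ hx))
  | succ j =>
    have hc := List.getElem?_eq_getElem (Nat.lt_of_succ_le hj)
    rw [varList_ulhs_succ hc, List.mem_append] at hx
    exact hx.elim (mem_Xlist_of_mem_varList hc) (Xlist_succ_subset_succ j.le_succ ·)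

theorem notMem_varList_of_mem_source (hW : IsWLL R) (hU : IsUWLL R) (hρ : ρ ∈ R)
    (hc : ρ.conds[j]? = some c) {d : Term F V × Term F V} (hd : d ∈ ρ.conds.take (j + 1)) {x : V}
    (hx : x ∈ d.1.varList) : x ∉ c.2.varList := by
  obtain ⟨i, hi, hdi⟩ := List.mem_take_iff_getElem.1 hd
  have hdi := List.getElem?_eq_some_iff.2 ⟨hi.trans_le (min_le_right _ _), hdi⟩
  have hX : x ∈ Xlist ρ (i + 1) := hU.mem_Xlist hρ (by omega)
    (varList_urhs hdi ▸ List.mem_append_left _ hx)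
  exact (hW ρ hρ).notMem_varList hc (Xlist_succ_subset_succ (by omega) hX)
    (List.mem_of_getElem? hdi) hx

end Unraveling

/-! ### Advancing the evaluation of the conditions -/

section Advance

variable {F V : Type} [DecidableEq V] {R : CTRS F V} {ar : F → ℕ} {ρ : CRule F V} {j : ℕ}
  {u : Term F V} {τ : V → STerm F V}

theorem FiresUpTo.succ {σ σ' : V → Term F V} (h : FiresUpTo R ρ j σ u)
    {c : Term F V × Term F V} (hc : ρ.conds[j]? = some c)
    (hX : ∀ x ∈ Xlist ρ (j + 1), RedStar R (σ x) (σ' x))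
    (hsrc : ∀ d ∈ ρ.conds.take (j + 1), d.1.subst σ' = d.1.subst σ)
    (hcond : RedStar R (c.1.subst σ) (c.2.subst σ')) : FiresUpTo R ρ (j + 1) σ' u := by
  refine ⟨h.1.trans (RedStar.subst fun x hx => hX x (mem_Xlist_iff.2 (.inl hx))), fun d hd => ?_⟩
  rw [hsrc d hd]
  rw [List.take_add_one, hc, List.mem_append] at hd
  rcases hd with hd | hd
  · exact (h.2 d hd).trans (RedStar.subst fun x hx =>
      hX x (mem_Xlist_iff.2 (.inr (mem_Vlist_succ_iff.2 ⟨d, hd, hx⟩))))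
  · rwa [List.mem_singleton.1 hd]

theorem ExtMatch.exists_firesUpTo_zero (hU : IsUWLL R) (hρ : ρ ∈ R) {t : STerm F V}
    (hm : ExtMatch ar τ ρ.lhs t) (hu : Simulates R ar u t) :
    ∃ σ, FiresUpTo R ρ 0 σ u ∧ ∀ x ∈ (urhs ρ 0).varList, Simulates R ar (σ x) (τ x) := by
  have hcount := fun x hx => (hU.count_ulhs hρ (Nat.zero_le _) (x := x) hx).le
  have hmem := fun x hx => hU.mem_varList_ulhs hρ (Nat.zero_le _) (x := x) hx
  rw [varList_ulhs_zero] at hcount hmem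
  obtain ⟨σ, hred, htr⟩ := hm.exists_tracks hu hcount
  exact ⟨σ, ⟨hred, fun c hc => absurd hc List.not_mem_nil⟩, fun x hx => (htr x (hmem x hx)).1 hx⟩

theorem FiresUpTo.exists_succ (hW : IsWLL R) (hU : IsUWLL R) (hρ : ρ ∈ R) {σ : V → Term F V}
    (h : FiresUpTo R ρ j σ u) {c : Term F V × Term F V} (hc : ρ.conds[j]? = some c)
    (hX : ∀ x ∈ Xlist ρ (j + 1), Simulates R ar (σ x) (τ x)) {e : STerm F V}
    (he : Simulates R ar (c.1.subst σ) e) (hm : ExtMatch ar τ c.2 e) :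
    ∃ σ', FiresUpTo R ρ (j + 1) σ' u ∧
      ∀ x ∈ (urhs ρ (j + 1)).varList, Simulates R ar (σ' x) (τ x) := by
  have hj : j + 1 ≤ ρ.conds.length := (List.getElem?_eq_some_iff.1 hc).1
  have hcount := fun x hx => (hU.count_ulhs hρ hj (x := x) hx).le
  have hmem := fun x hx => hU.mem_varList_ulhs hρ hj (x := x) hx
  simp only [varList_ulhs_succ hc, List.count_append, List.mem_append] at hcount hmem
  obtain ⟨σ₁, hred, htr⟩ := hm.exists_tracks he
    fun x hx => (Nat.le_add_right _ _).trans (hcount x hx)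
  set σ' := c.2.varList.toFinset.piecewise σ₁ σ
  have on_pat : ∀ x ∈ c.2.varList, σ' x = σ₁ x := fun x hx =>
    Finset.piecewise_eq_of_mem _ _ _ (List.mem_toFinset.2 hx)
  have off_pat : ∀ x ∉ c.2.varList, σ' x = σ x := fun x hx =>
    Finset.piecewise_eq_of_notMem _ _ _ (mt List.mem_toFinset.1 hx)
  refine ⟨σ', h.succ hc (fun x hx => ?_) (fun d hd => ?_) ?_, fun x hx => ?_⟩
  · by_cases hxc : x ∈ c.2.varList
    · have hnot : x ∉ (urhs ρ (j + 1)).varList := fun hx' => by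
        have := hcount x hx'
        have := List.count_pos_iff.2 hx
        have := List.count_pos_iff.2 hxc
        omega
      obtain ⟨v, hv, hredv⟩ := (hX x hx).exists_hatT_eq_some
      rwa [on_pat x hxc, ← Option.some_injective _ (hv.symm.trans ((htr x hxc).2 hnot))]
    · exact off_pat x hxc ▸ .refl
  · exact Term.subst_congr fun x hx =>
      off_pat x (notMem_varList_of_mem_source hW hU hρ hc hd hx)
  · rwa [Term.subst_congr on_pat]
  · by_cases hxc : x ∈ c.2.varList
    · exact on_pat x hxc ▸ (htr x hxc).1 hx
    · exact off_pat x hxc ▸ hX x ((hmem x hx).resolve_left hxc)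

/-- `SRRedex ar ρ τ j t`: the target term `t` is an instance, up to the extra arguments not
inspected by the rule, of the left-hand side of the `j`-th rule obtained from `ρ` by the SR
transformation, and `τ` is the restriction of the matching substitution to the variables of `ρ`. -/
inductive SRRedex (ar : F → ℕ) (ρ : CRule F V) (τ : V → STerm F V) : ℕ → STerm F V → Prop where
  | zero {t : STerm F V} : ExtMatch ar τ ρ.lhs t → SRRedex ar ρ τ 0 t
  | succ {j : ℕ} {f : F} {args : List (STerm F V)} {c : Term F V × Term F V} {e : STerm F V} :
      ExtMatch ar τ ρ.lhs (.app (.orig f) args) → ρ.conds[j]? = some c → ExtMatch ar τ c.2 e →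
      .app (.tup ρ (j + 1)) (guardT e :: (Vlist ρ (j + 1)).map τ) ∈ args.drop (ar f) →
      SRRedex ar ρ τ (j + 1) (.app (.orig f) args)

theorem SRRedex.extMatch_lhs {t : STerm F V} (h : SRRedex ar ρ τ j t) :
    ExtMatch ar τ ρ.lhs t := by
  cases h <;> assumption

theorem SRRedex.exists_firesUpTo (hW : IsWLL R) (hU : IsUWLL R) (hρ : ρ ∈ R) {t : STerm F V}
    (h : SRRedex ar ρ τ j t) (hu : Simulates R ar u t) :
    ∃ σ, FiresUpTo R ρ j σ u ∧ ∀ x ∈ (urhs ρ j).varList, Simulates R ar (σ x) (τ x) := by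
  cases h with
  | zero hm => exact hm.exists_firesUpTo_zero hU hρ hu
  | succ hlhs hc hm hslot =>
    cases hu with
    | orig _ _ hslots =>
      cases hslots _ hslot with
      | @tup _ _ _ _ _ _ c' σ _ hc' hfire he hV hbinds =>
        obtain rfl : _ = c' := Option.some_injective _ (hc.symm.trans hc')
        rw [List.forall₂_map_left_iff, List.forall₂_map_right_iff, List.forall₂_same] at hV
        refine hfire.exists_succ hW hU hρ hc (fun x hx => ?_) (simulates_guardT_iff.1 he) hm
        exact (mem_Xlist_iff.1 hx).elim (fun hx => hbinds x _ (hlhs.patternBinds hx)) (hV x)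

end Advance

/-! ### Preservation of the simulation -/

section Preservation

variable {F V : Type}

/-- All terms of the rule `ρ` respect the arities `ar`. -/
structure CRule.WF (ar : F → ℕ) (ρ : CRule F V) : Prop where
  lhs : ρ.lhs.WF ar
  rhs : ρ.rhs.WF ar
  conds : ∀ c ∈ ρ.conds, c.1.WF ar ∧ c.2.WF ar

theorem PatternBinds.of_take_eq {ar : F → ℕ} {f g : F} {ws : List (Term F V)}
    {args args' : List (STerm F V)} {x : V} {b : STerm F V}
    (h : PatternBinds ar (.app g ws) (.app (.orig f) args') x b)
    (hargs : args'.take (ar f) = args.take (ar f)) :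
    PatternBinds ar (.app g ws) (.app (.orig f) args) x b := by
  cases h with | app hz hb => exact .app (hargs ▸ hz) hb

variable [DecidableEq V]

/-- The root steps of `SR(R)`, with the matching substitutions exposed only as far as soundness
depends on them: `eval` leaves open which extra argument is overwritten, and `shift` moves any
number of symbols `⟨·⟩` at once. -/
inductive SRRootStep (R : CTRS F V) (ar mOf : F → ℕ) : STerm F V → STerm F V → Prop where
  | reduce {ρ : CRule F V} {τ : WVar V → STerm F V} {f : F} {args : List (STerm F V)} :
      ρ ∈ R → SRRedex ar ρ (fun x => τ (Sum.inl x)) ρ.conds.length (.app (.orig f) args) →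
      SRRootStep R ar mOf (.app (.orig f) args) (guardT ((barT mOf ρ.rhs).subst τ))
  | eval {ρ : CRule F V} {j : ℕ} {c : Term F V × Term F V} {τ : WVar V → STerm F V} {f : F}
      {args args' : List (STerm F V)} : ρ ∈ R → ρ.conds[j]? = some c →
      SRRedex ar ρ (fun x => τ (Sum.inl x)) j (.app (.orig f) args) →
      args'.take (ar f) = args.take (ar f) →
      args'.drop (ar f) ⊆ (tupT ρ (j + 1) (barT mOf c.1)).subst τ :: args.drop (ar f) →
      SRRootStep R ar mOf (.app (.orig f) args) (.app (.orig f) args')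
  | guard (t : STerm F V) : SRRootStep R ar mOf (guardT (guardT t)) (guardT t)
  | shift {f : F} {as as' es : List (STerm F V)} : as.length = ar f →
      List.Forall₂ (fun a a' => a = a' ∨ a = guardT a') as as' →
      SRRootStep R ar mOf (.app (.orig f) (as ++ es))
        (guardT (.app (.orig f) (as' ++ List.replicate (mOf f) botT)))

theorem subst_tupT (τ : WVar V → STerm F V) (ρ : CRule F V) (j : ℕ) (t : STerm F V) :
    (tupT ρ j t).subst τ =
      .app (.tup ρ j) (guardT (t.subst τ) :: (Vlist ρ j).map fun x => τ (Sum.inl x)) := by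
  rw [tupT, Term.subst_app, List.map_cons, subst_guardT, List.map_map]
  simp only [Function.comp_def, Term.subst_var]

/-- Replacing the target term `t` by `t'`, in any context, preserves simulation.  Besides `t`
itself, the context may refer to `t` as an extra argument or match a pattern against it. -/
structure Refines (R : CTRS F V) (ar : F → ℕ) (t t' : STerm F V) : Prop where
  simulates {u : Term F V} : Simulates R ar u t → Simulates R ar u t'
  slotSimulates {u : Term F V} {s : STerm F V} :
    SlotSimulates R ar u s t → SlotSimulates R ar u s t'
  patternBinds {f : F} {ws : List (Term F V)} {x : V} {b' : STerm F V} :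
    PatternBinds ar (.app f ws) t' x b' →
    ∃ b, PatternBinds ar (.app f ws) t x b ∧ ∀ u, Simulates R ar u b → Simulates R ar u b'

variable {R : CTRS F V} {ar mOf : F → ℕ}

variable (R ar) in
theorem Refines.refl (t : STerm F V) : Refines R ar t t :=
  ⟨id, id, fun h => ⟨_, h, fun _ => id⟩⟩

theorem Refines.exists_patternBinds {t t' : STerm F V} (h : Refines R ar t t') {w : Term F V}
    {x : V} {b' : STerm F V} (hb' : PatternBinds ar w t' x b') :
    ∃ b, PatternBinds ar w t x b ∧ ∀ u, Simulates R ar u b → Simulates R ar u b' := by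
  cases w with
  | var y => cases hb'; exact ⟨t, .var _ t, fun _ => h.simulates⟩
  | app f ws => exact h.patternBinds hb'

theorem SlotSimulates.of_patternBinds (hL : ∀ ρ ∈ R, ρ.LhsNonVar) {u : Term F V}
    {t t' e : STerm F V} (h : SlotSimulates R ar u t e)
    (hbinds : ∀ f ws x b', PatternBinds ar (.app f ws) t' x b' →
      ∃ b, PatternBinds ar (.app f ws) t x b ∧ ∀ u, Simulates R ar u b → Simulates R ar u b') :
    SlotSimulates R ar u t' e := by
  cases h with
  | bot => exact .bot
  | @tup _ _ _ _ ρ _ _ _ hρ hc hfire he hV hlhs =>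
    refine .tup hρ hc hfire he hV fun x b' hb' => ?_
    cases hl : ρ.lhs with
    | var y => exact absurd hl (hL ρ hρ y)
    | app f ws =>
      rw [hl] at hlhs hb'
      obtain ⟨b, hb, himp⟩ := hbinds f ws x b' hb'
      exact himp _ (hlhs x b hb)

theorem Refines.app (hL : ∀ ρ ∈ R, ρ.LhsNonVar) (g : SSym F V) {args args' : List (STerm F V)}
    (h : List.Forall₂ (Refines R ar) args args') : Refines R ar (.app g args) (.app g args') := by
  have hbinds : ∀ f ws x b', PatternBinds ar (.app f ws) (.app g args') x b' →
      ∃ b, PatternBinds ar (.app f ws) (.app g args) x b ∧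
        ∀ u, Simulates R ar u b → Simulates R ar u b' := by
    rintro f ws x b' (_ | ⟨hz, hb'⟩)
    obtain ⟨t, hz, ht⟩ := exists_mem_zip_of_forall₂ (List.forall₂_take _ h) hz
    obtain ⟨b, hb, himp⟩ := ht.exists_patternBinds hb'
    exact ⟨b, .app hz hb, himp⟩
  refine ⟨fun {u} hu => ?_, fun {u s} hu => ?_, hbinds _ _ _ _⟩
  · cases hu with
    | guard hu =>
      cases h with
      | cons ht hnil => cases hnil; exact .guard (ht.simulates hu)
    | orig hred hargs hslots =>
      refine .orig hred ?_ fun e' he' => ?_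
      · exact (forall₂_comp hargs (List.forall₂_take _ h)).imp
          fun _ _ ⟨_, hu, ht⟩ => ht.simulates hu
      · obtain ⟨e, he, hee'⟩ := exists_mem_of_forall₂ (List.forall₂_drop _ h) he'
        exact (hee'.slotSimulates (hslots e he)).of_patternBinds hL hbinds
  · cases hu with
    | bot => cases h; exact .bot
    | tup hρ hc hfire he hV hlhs =>
      cases h with
      | cons he' hvs =>
        exact .tup hρ hc hfire (he'.simulates he)
          ((forall₂_comp hV hvs).imp fun _ _ ⟨_, hu, ht⟩ => ht.simulates hu) hlhs

theorem SRRedex.refines_reduce (hW : IsWLL R) (hU : IsUWLL R) {ρ : CRule F V} (hρ : ρ ∈ R)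
    (hwf : ρ.WF ar) {τ : WVar V → STerm F V} {f : F} {args : List (STerm F V)}
    (h : SRRedex ar ρ (fun x => τ (Sum.inl x)) ρ.conds.length (.app (.orig f) args)) :
    Refines R ar (.app (.orig f) args) (guardT ((barT mOf ρ.rhs).subst τ)) where
  simulates hu := by
    obtain ⟨σ, hfire, hsim⟩ := h.exists_firesUpTo hW hU hρ hu
    rw [varList_urhs_length] at hsim
    exact .guard ((Simulates.subst_barT hwf.rhs hsim).of_redStar (hfire.redStar_rhs hρ))
  slotSimulates hu := nomatch hu
  patternBinds hb := nomatch hb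

theorem SRRedex.slotSimulates_subst_tupT (hW : IsWLL R) (hU : IsUWLL R) {ρ : CRule F V}
    (hρ : ρ ∈ R) (hwf : ρ.WF ar) {j : ℕ} {c : Term F V × Term F V} (hc : ρ.conds[j]? = some c)
    {τ : WVar V → STerm F V} {t t' : STerm F V} {u : Term F V}
    (h : SRRedex ar ρ (fun x => τ (Sum.inl x)) j t) (hu : Simulates R ar u t)
    (hbinds : ∀ x b, PatternBinds ar ρ.lhs t' x b → PatternBinds ar ρ.lhs t x b) :
    SlotSimulates R ar u t' ((tupT ρ (j + 1) (barT mOf c.1)).subst τ) := by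
  obtain ⟨σ, hfire, hsim⟩ := h.exists_firesUpTo hW hU hρ hu
  simp only [varList_urhs hc, List.mem_append, mem_Xlist_iff] at hsim
  rw [subst_tupT]
  refine .tup hρ hc hfire (.guard (Simulates.subst_barT (hwf.conds c (List.mem_of_getElem? hc)).1
    fun x hx => hsim x (.inl hx))) ?_ fun x b hb => ?_
  · rw [List.forall₂_map_left_iff, List.forall₂_map_right_iff, List.forall₂_same]
    exact fun x hx => hsim x (.inr (.inr hx))
  · rw [(hbinds x b hb).eq_of_extMatch h.extMatch_lhs]
    exact hsim x (.inr (.inl hb.mem_varList))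

theorem SRRedex.refines_eval (hL : ∀ ρ ∈ R, ρ.LhsNonVar) (hW : IsWLL R) (hU : IsUWLL R)
    {ρ : CRule F V} (hρ : ρ ∈ R) (hwf : ρ.WF ar) {j : ℕ} {c : Term F V × Term F V}
    (hc : ρ.conds[j]? = some c) {τ : WVar V → STerm F V} {f : F} {args args' : List (STerm F V)}
    (h : SRRedex ar ρ (fun x => τ (Sum.inl x)) j (.app (.orig f) args))
    (htake : args'.take (ar f) = args.take (ar f))
    (hdrop : args'.drop (ar f) ⊆ (tupT ρ (j + 1) (barT mOf c.1)).subst τ :: args.drop (ar f)) :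
    Refines R ar (.app (.orig f) args) (.app (.orig f) args') where
  simulates {u} hu := by
    have htup : SlotSimulates R ar u (.app (.orig f) args')
        ((tupT ρ (j + 1) (barT mOf c.1)).subst τ) := by
      refine h.slotSimulates_subst_tupT hW hU hρ hwf hc hu fun x b hb => ?_
      cases hl : ρ.lhs with
      | var y => exact absurd hl (hL ρ hρ y)
      | app g ws => exact (hl ▸ hb).of_take_eq htake
    cases hu with
    | orig hred hargs hslots =>
      refine .orig hred (htake ▸ hargs) fun e he => ?_
      rcases List.mem_cons.1 (hdrop he) with rfl | he
      · exact htup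
      · exact (hslots e he).of_patternBinds hL
          fun _ _ _ _ hb => ⟨_, hb.of_take_eq htake, fun _ => id⟩
  slotSimulates hu := nomatch hu
  patternBinds hb := ⟨_, hb.of_take_eq htake, fun _ => id⟩

variable (R ar) in
theorem refines_guardT_guardT (t : STerm F V) :
    Refines R ar (guardT (guardT t)) (guardT t) where
  simulates := simulates_guardT_iff.1
  slotSimulates hu := nomatch hu
  patternBinds hb := nomatch hb

theorem refines_shift {f : F} {as as' es : List (STerm F V)} (hlen : as.length = ar f)
    (h : List.Forall₂ (fun a a' => a = a' ∨ a = guardT a') as as') :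
    Refines R ar (.app (.orig f) (as ++ es))
      (guardT (.app (.orig f) (as' ++ List.replicate (mOf f) botT))) where
  simulates {u} hu := by
    cases hu with
    | orig hred hargs _ =>
      rw [List.take_left' hlen] at hargs
      have hlen' : as'.length = ar f := h.length_eq ▸ hlen
      refine .guard (.orig hred ?_ ?_)
      · rw [List.take_left' hlen']
        refine (forall₂_comp hargs h).imp ?_
        rintro u a' ⟨_, hu, rfl | rfl⟩
        exacts [hu, simulates_guardT_iff.1 hu]
      · rw [List.drop_left' hlen']
        exact fun e he => (List.eq_of_mem_replicate he).symm ▸ .bot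
  slotSimulates hu := nomatch hu
  patternBinds hb := nomatch hb

theorem SRRootStep.refines (hwf : ∀ ρ ∈ R, ρ.WF ar) (hL : ∀ ρ ∈ R, ρ.LhsNonVar) (hW : IsWLL R)
    (hU : IsUWLL R) {t t' : STerm F V} (h : SRRootStep R ar mOf t t') : Refines R ar t t' := by
  cases h with
  | reduce hρ h => exact h.refines_reduce hW hU hρ (hwf _ hρ)
  | eval hρ hc h htake hdrop => exact h.refines_eval hL hW hU hρ (hwf _ hρ) hc htake hdrop
  | guard t => exact refines_guardT_guardT R ar t
  | shift hlen h => exact refines_shift hlen h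

theorem Refines.of_ctxStep (hL : ∀ ρ ∈ R, ρ.LhsNonVar) {r : STerm F V → STerm F V → Prop}
    (hr : r ≤ Refines R ar) {t t' : STerm F V} (h : CtxStep r t t') : Refines R ar t t' := by
  induction h with
  | root h => exact hr _ _ h
  | congr _ ih =>
    have hrefl (ts : List (STerm F V)) : List.Forall₂ (Refines R ar) ts ts :=
      List.forall₂_same.2 fun t _ => Refines.refl R ar t
    exact .app hL _ (List.rel_append (hrefl _) (.cons ih (hrefl _)))

end Preservation

/-! ### The rules of `SR(R)` -/

section SRRules

variable {F V : Type}

/-- The row `z₁, …, z_{i-1}, t, z_{i+1}, …, z_m` of extra arguments, where the fresh variables are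
numbered from `c` on. -/
def slotRow (m i c : ℕ) (t : STerm F V) : List (STerm F V) :=
  (List.range m).map fun q => if q = i - 1 then t else .var (Sum.inr (c + q))

theorem subst_mem_map_subst_slotRow {m i : ℕ} (hi : 1 ≤ i ∧ i ≤ m) (c : ℕ)
    (τ : WVar V → STerm F V) (t : STerm F V) : t.subst τ ∈ (slotRow m i c t).map (Term.subst τ) :=
  List.mem_map_of_mem (List.mem_map.2 ⟨i - 1, List.mem_range.2 (by omega), if_pos rfl⟩)

theorem map_subst_slotRow_subset (m i c : ℕ) (τ : WVar V → STerm F V) (t t' : STerm F V) :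
    (slotRow m i c t').map (Term.subst τ) ⊆
      t'.subst τ :: (slotRow m i c t).map (Term.subst τ) := by
  intro e he
  simp only [slotRow, List.map_map, List.mem_map, Function.comp_apply, List.mem_cons] at he ⊢
  obtain ⟨q, hq, rfl⟩ := he
  by_cases hqi : q = i - 1
  · exact .inl (by rw [if_pos hqi])
  · exact .inr ⟨q, hq, by rw [if_neg hqi, if_neg hqi]⟩

/-- The argument list `ext(w₁), …, ext(wₙ), z₁, …, z_{i-1}, t, z_{i+1}, …, z_m` shared by both sides
of the rules that the SR transformation derives from the `i`-th conditional rule of a symbol. -/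
def srArgs (mOf : F → ℕ) (f : F) (ws : List (Term F V)) (i : ℕ) (t : STerm F V) :
    List (STerm F V) :=
  (extTList mOf ws 0).1 ++ slotRow (mOf f) i (extTList mOf ws 0).2 t

variable {R : CTRS F V} {ar mOf : F → ℕ} {f : F} {ws : List (Term F V)}

theorem take_map_subst_srArgs (hws : (Term.app f ws).WF ar) (τ : WVar V → STerm F V) (i : ℕ)
    (t : STerm F V) : ((srArgs mOf f ws i t).map (Term.subst τ)).take (ar f) =
      (extTList mOf ws 0).1.map (Term.subst τ) := by
  cases hws with
  | app _ _ hlen hws =>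
    rw [srArgs, List.map_append, List.take_left']
    rw [← (forall₂_extMatch_extTList hws τ 0).length_eq, hlen]

theorem drop_map_subst_srArgs (hws : (Term.app f ws).WF ar) (τ : WVar V → STerm F V) (i : ℕ)
    (t : STerm F V) : ((srArgs mOf f ws i t).map (Term.subst τ)).drop (ar f) =
      (slotRow (mOf f) i (extTList mOf ws 0).2 t).map (Term.subst τ) := by
  cases hws with
  | app _ _ hlen hws =>
    rw [srArgs, List.map_append, List.drop_left']
    rw [← (forall₂_extMatch_extTList hws τ 0).length_eq, hlen]

theorem extMatch_srArgs (hws : (Term.app f ws).WF ar) (τ : WVar V → STerm F V) (i : ℕ)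
    (t : STerm F V) : ExtMatch ar (fun x => τ (Sum.inl x)) (.app f ws)
      (.app (.orig f) ((srArgs mOf f ws i t).map (Term.subst τ))) := by
  refine .app (take_map_subst_srArgs hws τ i t ▸ ?_)
  cases hws with | app _ _ _ hws => exact forall₂_extMatch_extTList hws τ 0

variable [DecidableEq V] {idx : CRule F V → ℕ} {ρ : CRule F V} {j : ℕ}
  {c : Term F V × Term F V}

theorem condSRRule_lhs_zero (hl : ρ.lhs = .app f ws) :
    (condSRRule mOf idx ρ 0).lhs = .app (.orig f) (srArgs mOf f ws (idx ρ) botT) := by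
  simp only [condSRRule, hl, if_true, srArgs, slotRow]

theorem condSRRule_lhs_succ (hl : ρ.lhs = .app f ws) (hc : ρ.conds[j]? = some c) :
    (condSRRule mOf idx ρ (j + 1)).lhs = .app (.orig f) (srArgs mOf f ws (idx ρ)
      (tupT ρ (j + 1) (extT mOf c.2 ((extTList mOf ws 0).2 + mOf f)).1)) := by
  simp only [condSRRule, hl, if_neg j.succ_ne_zero, srArgs, slotRow, Nat.add_sub_cancel,
    List.getD_eq_getElem?_getD, hc, Option.getD_some]

theorem condSRRule_rhs_length (hl : ρ.lhs = .app f ws) :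
    (condSRRule mOf idx ρ ρ.conds.length).rhs = guardT (barT mOf ρ.rhs) := by
  simp only [condSRRule, hl, if_true]

theorem condSRRule_rhs (hl : ρ.lhs = .app f ws) (hc : ρ.conds[j]? = some c) :
    (condSRRule mOf idx ρ j).rhs =
      .app (.orig f) (srArgs mOf f ws (idx ρ) (tupT ρ (j + 1) (barT mOf c.1))) := by
  have hj : j ≠ ρ.conds.length := (List.getElem?_eq_some_iff.1 hc).1.ne
  simp only [condSRRule, hl, if_neg hj, srArgs, slotRow, List.getD_eq_getElem?_getD, hc,
    Option.getD_some]

theorem exists_srRedex_condSRRule (hwf : ρ.WF ar) (hl : ρ.lhs = .app f ws)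
    (hidx : 1 ≤ idx ρ ∧ idx ρ ≤ mOf f) (hj : j ≤ ρ.conds.length) (τ : WVar V → STerm F V) :
    ∃ t, (condSRRule mOf idx ρ j).lhs = .app (.orig f) (srArgs mOf f ws (idx ρ) t) ∧
      SRRedex ar ρ (fun x => τ (Sum.inl x)) j
        (.app (.orig f) ((srArgs mOf f ws (idx ρ) t).map (Term.subst τ))) := by
  have hws : (Term.app f ws).WF ar := hl ▸ hwf.lhs
  cases j with
  | zero => exact ⟨_, condSRRule_lhs_zero hl, .zero (hl ▸ extMatch_srArgs hws τ _ _)⟩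
  | succ j =>
    have hc := List.getElem?_eq_getElem (Nat.lt_of_succ_le hj)
    have hm := extMatch_extT (mOf := mOf) (hwf.conds _ (List.mem_of_getElem? hc)).2 τ
      ((extTList mOf ws 0).2 + mOf f)
    refine ⟨_, condSRRule_lhs_succ hl hc, .succ (hl ▸ extMatch_srArgs hws τ _ _) hc hm ?_⟩
    rw [drop_map_subst_srArgs hws, ← subst_tupT]
    exact subst_mem_map_subst_slotRow hidx _ τ _

theorem srRootStep_condSRRule (hρ : ρ ∈ R) (hwf : ρ.WF ar) (hl : ρ.lhs = .app f ws)
    (hidx : 1 ≤ idx ρ ∧ idx ρ ≤ mOf f) (hj : j ≤ ρ.conds.length) (τ : WVar V → STerm F V) :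
    SRRootStep R ar mOf ((condSRRule mOf idx ρ j).lhs.subst τ)
      ((condSRRule mOf idx ρ j).rhs.subst τ) := by
  have hws : (Term.app f ws).WF ar := hl ▸ hwf.lhs
  obtain ⟨t, hlhs, hredex⟩ := exists_srRedex_condSRRule hwf hl hidx hj τ
  rw [hlhs, Term.subst_app]
  obtain rfl | hj := hj.eq_or_lt
  · rw [condSRRule_rhs_length hl, subst_guardT]
    exact .reduce hρ hredex
  · have hc := List.getElem?_eq_getElem hj
    rw [condSRRule_rhs hl hc, Term.subst_app]
    refine .eval hρ hc hredex ?_ ?_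
    · rw [take_map_subst_srArgs hws, take_map_subst_srArgs hws]
    · rw [drop_map_subst_srArgs hws, drop_map_subst_srArgs hws]
      exact map_subst_slotRow_subset _ _ _ τ t _

theorem srRootStep_uncondSRRule (hρ : ρ ∈ R) (hwf : ρ.WF ar) (hl : ρ.lhs = .app f ws)
    (hconds : ρ.conds = []) (τ : WVar V → STerm F V) :
    SRRootStep R ar mOf ((uncondSRRule mOf ρ).lhs.subst τ) ((uncondSRRule mOf ρ).rhs.subst τ) := by
  have hm := extMatch_extT (mOf := mOf) hwf.lhs τ 0
  rw [uncondSRRule, subst_guardT]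
  rw [hl, extT, Term.subst_app] at hm ⊢
  exact .reduce hρ (hconds ▸ .zero (hl ▸ hm))

theorem srRootStep_auxShift (f : F) (i : ℕ) (τ : WVar V → STerm F V) :
    SRRootStep R ar mOf ((auxShift ar mOf f i).lhs.subst τ)
      ((auxShift ar mOf f i).rhs.subst τ) := by
  simp only [auxShift, subst_guardT, Term.subst_app, List.map_append, List.map_replicate,
    subst_botT, List.map_map]
  refine .shift (by rw [List.length_map, List.length_range]) ?_
  rw [List.forall₂_map_left_iff, List.forall₂_map_right_iff, List.forall₂_same]
  intro q _
  simp only [Function.comp_apply]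
  split_ifs
  · exact .inr (subst_guardT τ _)
  · exact .inl rfl

theorem srRootStep_of_rootStep (hwf : ∀ ρ ∈ R, ρ.WF ar) (hL : ∀ ρ ∈ R, ρ.LhsNonVar)
    (hidx : ∀ ρ ∈ R, ρ.conds ≠ [] → ∀ f ws, ρ.lhs = .app f ws → 1 ≤ idx ρ ∧ idx ρ ≤ mOf f)
    (prev : STerm F V → STerm F V → Prop) :
    RootStep (SRSys R ar mOf idx) prev ≤ SRRootStep R ar mOf := by
  have hlhs : ∀ ρ ∈ R, ∃ f ws, ρ.lhs = .app f ws := fun ρ hρ => by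
    cases hl : ρ.lhs with
    | var x => exact absurd hl (hL ρ hρ x)
    | app f ws => exact ⟨f, ws, rfl⟩
  rintro _ _ ⟨r, hr, τ, rfl, rfl, -⟩
  rcases hr with ⟨ρ, hρ, hconds, rfl⟩ | ⟨ρ, hρ, hconds, j, hj, rfl⟩ | rfl | ⟨f, i, -, rfl⟩
  · obtain ⟨f, ws, hl⟩ := hlhs ρ hρ
    exact srRootStep_uncondSRRule hρ (hwf ρ hρ) hl hconds τ
  · obtain ⟨f, ws, hl⟩ := hlhs ρ hρ
    exact srRootStep_condSRRule hρ (hwf ρ hρ) hl (hidx ρ hρ hconds f ws hl) hj τ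
  · simp only [auxGuard, subst_guardT]
    exact .guard _
  · exact srRootStep_auxShift f i τ

theorem Refines.of_red (hwf : ∀ ρ ∈ R, ρ.WF ar) (hL : ∀ ρ ∈ R, ρ.LhsNonVar)
    (hidx : ∀ ρ ∈ R, ρ.conds ≠ [] → ∀ f ws, ρ.lhs = .app f ws → 1 ≤ idx ρ ∧ idx ρ ≤ mOf f)
    (hW : IsWLL R) (hU : IsUWLL R) {t t' : STerm F V} (h : Red (SRSys R ar mOf idx) t t') :
    Refines R ar t t' := by
  obtain ⟨_ | n, h⟩ := h
  · exact h.elim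
  · exact .of_ctxStep hL
      (fun _ _ h => (srRootStep_of_rootStep hwf hL hidx _ _ _ h).refines hwf hL hW hU) h

end SRRules

theorem SR_sound_for_WLL_UWLL_general {F V : Type} [DecidableEq V] {R : CTRS F V} {ar mOf : F → ℕ}
    {idx : CRule F V → ℕ} (hwf : ∀ ρ ∈ R, ρ.WF ar) (hL : ∀ ρ ∈ R, ρ.LhsNonVar)
    (hidx : ∀ ρ ∈ R, ρ.conds ≠ [] → ∀ f ws, ρ.lhs = .app f ws → 1 ≤ idx ρ ∧ idx ρ ≤ mOf f)
    (hW : IsWLL R) (hU : IsUWLL R) {s : Term F V} (hs : s.WF ar) {t : STerm F V}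
    (h : RedStar (SRSys R ar mOf idx) (guardT (barT mOf s)) t) :
    ∃ u, hatT ar t = some u ∧ RedStar R s u := by
  suffices Simulates R ar s t from this.exists_hatT_eq_some
  induction h with
  | refl =>
    have hbar := Simulates.subst_barT (R := R) (mOf := mOf) hs (σ := .var) (τ := .var)
      fun x _ => .var .refl
    rw [Term.subst_id, Term.subst_id] at hbar
    exact .guard hbar
  | tail _ hstep ih => exact (Refines.of_red hwf hL hidx hW hU hstep).simulates ih

/-- **Soundness of the SR transformation for WLL and `U`-WLL DCTRSs.**
For every term `s ∈ T(F,V)` and every term `t ∈ T(F̄,V)`, if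
`⟨s̄⟩ →*_{SR(R)} t`, then `s →*_R t̂` whenever the backtranslation `t̂` is
defined. -/
theorem SR_sound_for_WLL_UWLL {F V : Type} [DecidableEq V]
    (R : CTRS F V) (ar mOf : F → ℕ) (idx : CRule F V → ℕ)
    (hS : GoodSetup R ar mOf idx) (hD : IsDCTRS R)
    (hW : IsWLL R) (hU : IsUWLL R)
    (s : Term F V) (hs : s.WF ar) (t : STerm F V)
    (h : RedStar (SRSys R ar mOf idx) (guardT (barT mOf s)) t) :
    ∀ u : Term F V, hatT ar t = some u → RedStar R s u := by
  intro u hu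
  obtain ⟨hwf, -, hidx, -⟩ := hS
  obtain ⟨v, hv, hred⟩ := SR_sound_for_WLL_UWLL_general
    (fun ρ hρ => have ⟨hl, hr, hc⟩ := hwf ρ hρ; ⟨hl, hr, hc⟩) (fun ρ hρ => (hD ρ hρ).2.2) hidx
    hW hU hs h
  exact Option.some_injective _ (hu.symm.trans hv) ▸ hred
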